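/- Let k be a commutative ring, H a Hopf algebra over k that is finitely generated, faithful and projective as a k-module, and A a right H-comodule algebra with coaction ρ(a) = Σ a_0 ⊗ a_1. Then the following are equivalent: (1) the map can' : A ⊗_k A → A ⊗_k H, can'(a' ⊗ a) = Σ a'a_0 ⊗ a_1, is bijective and A is faithfully flat as a k-module; (2) the k-linear map Φ : Hom_k(H, k) ⊗_k A → End_k(A), Φ(h* ⊗ a)(b) = Σ h*(b_1)·b_0·a, is bijective and A is finitely generated, faithful and projective as a k-module. -/

import Mathlib

open TensorProduct CoalgebraStruct

universe u

section Hopf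

variable (k A H : Type u) [CommRing k] [Ring A] [Algebra k A]
  [Ring H] [HopfAlgebra k H]

/-- `ρ : A → A ⊗ H` makes the `k`-algebra `A` a right `H`-comodule algebra. -/
noncomputable def IsComoduleAlgebra (ρ : A →ₐ[k] A ⊗[k] H) : Prop :=
  (∀ a : A, TensorProduct.assoc k A H H (LinearMap.rTensor H ρ.toLinearMap (ρ a)) =
      LinearMap.lTensor A (comul (R := k)) (ρ a)) ∧
  (∀ a : A, TensorProduct.rid k A (LinearMap.lTensor A (counit (R := k)) (ρ a)) = a)

/-- The canonical map `can' : A ⊗ A → A ⊗ H`, `a' ⊗ a ↦ Σ a' a_0 ⊗ a_1`. -/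
noncomputable def canHopf (ρ : A →ₐ[k] A ⊗[k] H) : A ⊗[k] A →ₗ[k] A ⊗[k] H :=
  LinearMap.rTensor H (LinearMap.mul' k A) ∘ₗ
    (TensorProduct.assoc k A A H).symm.toLinearMap ∘ₗ
    LinearMap.lTensor A ρ.toLinearMap

/-- For `h* : H → k` and `a : A`, the endomorphism `b ↦ Σ h*(b_1) b_0 a` of `A`. -/
noncomputable def phiAux (ρ : A →ₐ[k] A ⊗[k] H) (h' : Module.Dual k H) (a : A) :
    A →ₗ[k] A :=
  LinearMap.mulRight k a ∘ₗ (TensorProduct.rid k A).toLinearMap ∘ₗ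
    LinearMap.lTensor A h' ∘ₗ ρ.toLinearMap

/-- The map `Φ : Hom_k(H, k) ⊗ A → End_k(A)`, `Φ(h* ⊗ a)(b) = Σ h*(b_1) b_0 a`. -/
noncomputable def phiMap (ρ : A →ₐ[k] A ⊗[k] H) :
    Module.Dual k H ⊗[k] A →ₗ[k] (A →ₗ[k] A) :=
  TensorProduct.lift (LinearMap.mk₂ k (phiAux k A H ρ)
    (fun h₁ h₂ a => by
      ext b
      simp [phiAux, LinearMap.lTensor_add, mul_add, add_mul])
    (fun r h a => by
      ext b
      simp [phiAux, LinearMap.lTensor_smul, smul_mul_assoc])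
    (fun h a₁ a₂ => by
      ext b
      simp [phiAux, mul_add])
    (fun r h a => by
      ext b
      simp [phiAux, mul_smul_comm]))

/-! The canonical map `can'` is the left `A`-linear extension of `ρ`. Under the identification of
`Hom_A(A ⊗ X, A)` with `Hom_k(X, A)`, the map `Φ` becomes precomposition with `can'`, that is, the
`A`-dual of `can'`; duality detects isomorphisms between finite projective modules. If `can'` is an
isomorphism, then `A ⊗ A ≅ A ⊗ H` is finite projective over `A`, and faithfully flat descent along
`k → A` makes `A` finite projective over `k`. -/

section Precomposition

variable {R P Q X : Type*} [Ring R] [AddCommGroup P] [Module R P] [AddCommGroup Q] [Module R Q]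
  [AddCommGroup X] [Module R X]

theorem bijective_precomp_of_bijective {f : P →ₗ[R] Q} (hf : Function.Bijective f) :
    Function.Bijective (fun u : Q →ₗ[R] X ↦ u ∘ₗ f) := by
  refine ⟨fun u v huv ↦ (LinearMap.cancel_right hf.surjective).1 huv, fun w ↦ ?_⟩
  let e := LinearEquiv.ofBijective f hf
  exact ⟨w ∘ₗ e.symm.toLinearMap, LinearMap.ext fun x ↦ congrArg w (e.symm_apply_apply x)⟩

theorem bijective_of_bijective_precomp {f : P →ₗ[R] Q}
    (hP : Function.Bijective (fun u : Q →ₗ[R] P ↦ u ∘ₗ f))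
    (hQ : Function.Injective (fun u : Q →ₗ[R] Q ↦ u ∘ₗ f)) : Function.Bijective f := by
  obtain ⟨g, hgf : g ∘ₗ f = LinearMap.id⟩ := hP.surjective LinearMap.id
  have hfg : f ∘ₗ g = LinearMap.id := hQ <| by
    simp only [LinearMap.comp_assoc, hgf, LinearMap.comp_id, LinearMap.id_comp]
  exact ⟨LinearMap.injective_of_comp_eq_id f g hgf, LinearMap.surjective_of_comp_eq_id g f hfg⟩

theorem bijective_precomp_of_finite_projective [Module.Finite R X] [Module.Projective R X]
    {f : P →ₗ[R] Q} (hf : Function.Bijective (fun u : Q →ₗ[R] R ↦ u ∘ₗ f)) :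
    Function.Bijective (fun u : Q →ₗ[R] X ↦ u ∘ₗ f) := by
  obtain ⟨n, p, i, -, hi, hpi⟩ := Module.Finite.exists_comp_eq_id_of_projective R X
  constructor
  · intro u v huv
    have hcoord (l : Fin n) : LinearMap.proj l ∘ₗ i ∘ₗ u = LinearMap.proj l ∘ₗ i ∘ₗ v :=
      hf.injective (congrArg (fun w ↦ LinearMap.proj l ∘ₗ i ∘ₗ w) huv)
    exact LinearMap.ext fun y ↦ hi (funext fun l ↦ LinearMap.congr_fun (hcoord l) y)
  · intro w
    choose u hu using fun l : Fin n ↦ hf.surjective (LinearMap.proj l ∘ₗ i ∘ₗ w)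
    have hpi_u : LinearMap.pi u ∘ₗ f = i ∘ₗ w :=
      LinearMap.ext fun x ↦ funext fun l ↦ LinearMap.congr_fun (hu l) x
    refine ⟨p ∘ₗ LinearMap.pi u, ?_⟩
    simp only [LinearMap.comp_assoc, hpi_u]
    rw [← LinearMap.comp_assoc, hpi, LinearMap.id_comp]

theorem bijective_precomp_iff_bijective [Module.Finite R P] [Module.Projective R P]
    [Module.Finite R Q] [Module.Projective R Q] {f : P →ₗ[R] Q} :
    Function.Bijective (fun u : Q →ₗ[R] R ↦ u ∘ₗ f) ↔ Function.Bijective f :=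
  ⟨fun h ↦ bijective_of_bijective_precomp (bijective_precomp_of_finite_projective h)
    (bijective_precomp_of_finite_projective h).injective, bijective_precomp_of_bijective⟩

end Precomposition

section FaithfullyFlat

variable {R M : Type*} (S : Type*) [CommRing R] [Ring S] [Algebra R S] [AddCommGroup M] [Module R M]

theorem faithfullyFlat_iff_faithfulSMul [Module.Finite R M] [Module.Flat R M] :
    Module.FaithfullyFlat R M ↔ FaithfulSMul R M := by
  constructor <;> intro hM
  · refine ⟨fun {r₁ r₂} h ↦ ?_⟩
    have hzero : LinearMap.lsmul R R (r₁ - r₂) = 0 := by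
      rw [Module.FaithfullyFlat.zero_iff_lTensor_zero R M]
      refine TensorProduct.ext' fun m r ↦ ?_
      rw [LinearMap.lTensor_tmul, LinearMap.lsmul_apply, tmul_smul, smul_tmul', sub_smul, h m,
        sub_self, zero_tmul, LinearMap.zero_apply]
    simpa [sub_eq_zero] using LinearMap.congr_fun hzero 1
  · refine ⟨fun m hm htop ↦ hm.ne_top ((Ideal.eq_top_iff_one m).2 ?_)⟩
    -- Nakayama: `m • ⊤ = ⊤` gives an `r` with `r - 1 ∈ m` that annihilates `M`.
    obtain ⟨r, hr, hrM⟩ := Submodule.exists_sub_one_mem_and_smul_eq_zero_of_fg_of_le_smul m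
      (⊤ : Submodule R M) Module.Finite.fg_top htop.ge
    have hr0 : r = 0 := FaithfulSMul.eq_of_smul_eq_smul (α := M) fun a ↦ by
      rw [hrM a trivial, zero_smul]
    simpa [hr0] using hr

theorem finite_of_finite_baseChange [Module.FaithfullyFlat R S] [Module.Finite S (S ⊗[R] M)] :
    Module.Finite R M := by
  classical
  have hspan : (Submodule.span S (TensorProduct.mk R S M 1 '' Set.univ)).FG := by
    rw [← Submodule.baseChange_span, Submodule.span_univ, Submodule.baseChange_top]
    exact Module.Finite.fg_top
  obtain ⟨s, hs, hspan_s⟩ := (Submodule.fg_span_iff_fg_span_finset_subset _).1 hspan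
  obtain ⟨t, -, rfl⟩ := Finset.subset_set_image_iff.1 hs
  refine ⟨t, Submodule.baseChange_injective (A := S) ?_⟩
  rw [Submodule.baseChange_span, ← Finset.coe_image, ← hspan_s, ← Submodule.baseChange_span,
    Submodule.span_univ]

theorem finitePresentation_of_finitePresentation_baseChange [Module.FaithfullyFlat R S]
    [Module.FinitePresentation S (S ⊗[R] M)] : Module.FinitePresentation R M := by
  have : Module.Finite R M := finite_of_finite_baseChange S
  obtain ⟨n, f, hf⟩ := Module.Finite.exists_fin' R M
  have hker : (LinearMap.ker (f.baseChange S)).FG :=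
    Module.FinitePresentation.fg_ker _ (LinearMap.lTensor_surjective S hf)
  have hker_eq : LinearMap.ker (f.baseChange S) = (LinearMap.ker f).baseChange S :=
    SetLike.ext (lTensor_exact S (LinearMap.exact_subtype_ker_map f) hf)
  have : Module.Finite S ((LinearMap.ker f).baseChange S) := .of_fg (hker_eq ▸ hker)
  have : Module.Finite S (S ⊗[R] LinearMap.ker f) :=
    .equiv (Submodule.toBaseChange.toLinearEquiv S (LinearMap.ker f)).symm
  exact Module.finitePresentation_of_surjective f hf
    (Module.Finite.iff_fg.1 (finite_of_finite_baseChange S))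

theorem flat_of_flat_tensorProduct (N : Type*) [AddCommGroup N] [Module R N]
    [Module.FaithfullyFlat R N] [Module.Flat R (N ⊗[R] M)] : Module.Flat R M := by
  rw [Module.Flat.iff_lTensor_preserves_injective_linearMap]
  intro X Y _ _ _ _ f hf
  rw [← Module.FaithfullyFlat.lTensor_injective_iff_injective R N]
  simpa [LinearMap.lTensor_tensor] using
    Module.Flat.lTensor_preserves_injective_linearMap (M := N ⊗[R] M) f hf

theorem flat_of_projective_of_flat (P : Type*) [AddCommGroup P] [Module R P] [Module S P]
    [IsScalarTower R S P] [Module.Flat R S] [Module.Projective S P] : Module.Flat R P := by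
  obtain ⟨s, hs⟩ := Module.projective_def'.1 ‹Module.Projective S P›
  have : Module.Flat R (P →₀ S) := by
    classical exact .of_linearEquiv (finsuppLEquivDirectSum R S P)
  exact .of_retract (s.restrictScalars R) ((Finsupp.linearCombination S id).restrictScalars R)
    (LinearMap.ext fun x ↦ LinearMap.congr_fun hs x)

theorem finite_projective_of_finite_projective_baseChange [Module.FaithfullyFlat R S]
    [Module.Finite S (S ⊗[R] M)] [Module.Projective S (S ⊗[R] M)] :
    Module.Finite R M ∧ Module.Projective R M := by
  have : Module.FinitePresentation S (S ⊗[R] M) := Module.finitePresentation_of_projective _ _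
  have : Module.FinitePresentation R M := finitePresentation_of_finitePresentation_baseChange S
  have : Module.Flat R (S ⊗[R] M) := flat_of_projective_of_flat S _
  have : Module.Flat R M := flat_of_flat_tensorProduct S
  exact ⟨inferInstance, Module.Flat.projective_of_finitePresentation⟩

end FaithfullyFlat

section CanonicalMap

variable (R S M N : Type*) [CommRing R] [Ring S] [Algebra R S] [AddCommGroup M] [Module R M]
  [AddCommGroup N] [Module R N]

/-- Extension of scalars is left adjoint to restriction: for a possibly noncommutative `R`-algebra
`S`, an `R`-linear map `g : M → X` corresponds to the `S`-linear map `s ⊗ m ↦ s • g m`. -/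
noncomputable def extendScalarsEquiv (X : Type*) [AddCommGroup X] [Module R X] [Module S X]
    [IsScalarTower R S X] : (M →ₗ[R] X) ≃ₗ[R] (S ⊗[R] M →ₗ[S] X) :=
  (LinearMap.ringLmapEquivSelf S R (M →ₗ[R] X)).symm ≪≫ₗ
    AlgebraTensorModule.lift.equiv R S R S M X

variable {R S M N}

@[simp]
theorem extendScalarsEquiv_tmul {X : Type*} [AddCommGroup X] [Module R X] [Module S X]
    [IsScalarTower R S X] (g : M →ₗ[R] X) (s : S) (m : M) :
    extendScalarsEquiv R S M X g (s ⊗ₜ m) = s • g m :=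
  rfl

/-- The canonical map `s ⊗ n ↦ s • ρ n` attached to a linear map `ρ : N → S ⊗ M`; for a coaction
`ρ : A → A ⊗ H` it is the map `can'`. -/
noncomputable def canonicalMap (ρ : N →ₗ[R] S ⊗[R] M) : S ⊗[R] N →ₗ[S] S ⊗[R] M :=
  extendScalarsEquiv R S N (S ⊗[R] M) ρ

/-- The map `f ⊗ s ↦ (n ↦ Σ f(n_1) n_0 s)`, where `ρ n = Σ n_0 ⊗ n_1`, attached to a linear map
`ρ : N → S ⊗ M`; for a coaction `ρ : A → A ⊗ H` it is the map `Φ`. -/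
noncomputable def dualActionMap (ρ : N →ₗ[R] S ⊗[R] M) :
    Module.Dual R M ⊗[R] S →ₗ[R] (N →ₗ[R] S) :=
  LinearMap.lcomp R S ρ ∘ₗ LinearMap.restrictScalarsₗ R S (S ⊗[R] M) S R ∘ₗ
    (extendScalarsEquiv R S M S).toLinearMap ∘ₗ dualTensorHom R M S

theorem extendScalarsEquiv_dualActionMap (ρ : N →ₗ[R] S ⊗[R] M) (z : Module.Dual R M ⊗[R] S) :
    extendScalarsEquiv R S N S (dualActionMap ρ z) =
      extendScalarsEquiv R S M S (dualTensorHom R M S z) ∘ₗ canonicalMap ρ := by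
  refine AlgebraTensorModule.ext fun s n ↦ ?_
  simp [dualActionMap, canonicalMap]

theorem bijective_dualActionMap_iff_bijective_precomp [Module.Finite R M]
    [Module.Projective R M] (ρ : N →ₗ[R] S ⊗[R] M) :
    Function.Bijective (dualActionMap ρ) ↔
      Function.Bijective (fun u : S ⊗[R] M →ₗ[S] S ↦ u ∘ₗ canonicalMap ρ) := by
  let e := dualTensorHomEquiv R M S ≪≫ₗ extendScalarsEquiv R S M S
  have hcomm : extendScalarsEquiv R S N S ∘ dualActionMap ρ =
      (fun u : S ⊗[R] M →ₗ[S] S ↦ u ∘ₗ canonicalMap ρ) ∘ e :=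
    funext (extendScalarsEquiv_dualActionMap ρ)
  rw [← (extendScalarsEquiv R S N S).bijective.of_comp_iff', hcomm,
    Function.Bijective.of_comp_iff _ e.bijective]

theorem bijective_dualActionMap_iff_bijective_canonicalMap [Module.Finite R M]
    [Module.Projective R M] [Module.Finite R N] [Module.Projective R N] (ρ : N →ₗ[R] S ⊗[R] M) :
    Function.Bijective (dualActionMap ρ) ↔ Function.Bijective (canonicalMap ρ) := by
  rw [bijective_dualActionMap_iff_bijective_precomp, bijective_precomp_iff_bijective]

theorem finite_projective_of_bijective_canonicalMap [Module.FaithfullyFlat R S] [Module.Finite R M]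
    [Module.Projective R M] {ρ : N →ₗ[R] S ⊗[R] M} (hρ : Function.Bijective (canonicalMap ρ)) :
    Module.Finite R N ∧ Module.Projective R N := by
  let e := LinearEquiv.ofBijective (canonicalMap ρ) hρ
  have : Module.Finite S (S ⊗[R] N) := .equiv e.symm
  have : Module.Projective S (S ⊗[R] N) := .of_equiv e.symm
  exact finite_projective_of_finite_projective_baseChange S

theorem hopfGalois_iff_phi_bijective_general [Module.Finite R M] [Module.Projective R M]
    (ρ : S →ₗ[R] S ⊗[R] M) :
    (Function.Bijective (canonicalMap ρ) ∧ Module.FaithfullyFlat R S) ↔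
    (Function.Bijective (dualActionMap ρ) ∧
      Module.Finite R S ∧ Module.Projective R S ∧ FaithfulSMul R S) := by
  constructor
  · rintro ⟨hcan, hflat⟩
    obtain ⟨hfin, hproj⟩ := finite_projective_of_bijective_canonicalMap hcan
    exact ⟨(bijective_dualActionMap_iff_bijective_canonicalMap ρ).2 hcan, hfin, hproj,
      faithfullyFlat_iff_faithfulSMul.1 hflat⟩
  · rintro ⟨hdual, hfin, hproj, hfaithful⟩
    exact ⟨(bijective_dualActionMap_iff_bijective_canonicalMap ρ).1 hdual,
      faithfullyFlat_iff_faithfulSMul.2 hfaithful⟩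

end CanonicalMap

variable {k A H} in
theorem canHopf_eq_canonicalMap (ρ : A →ₐ[k] A ⊗[k] H) :
    canHopf k A H ρ = (canonicalMap ρ.toLinearMap).restrictScalars k := by
  refine TensorProduct.ext' fun a b ↦ ?_
  simp only [canHopf, canonicalMap, LinearMap.comp_apply, LinearMap.lTensor_tmul,
    AlgHom.toLinearMap_apply, LinearMap.restrictScalars_apply, extendScalarsEquiv_tmul]
  induction ρ b with
  | zero => simp
  | tmul x h => simp [smul_tmul']
  | add x y hx hy => simp only [tmul_add, map_add, hx, hy, smul_add]

variable {k A H} in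
theorem phiMap_eq_dualActionMap (ρ : A →ₐ[k] A ⊗[k] H) :
    phiMap k A H ρ = dualActionMap ρ.toLinearMap := by
  refine TensorProduct.ext' fun f a ↦ LinearMap.ext fun b ↦ ?_
  simp only [phiMap, phiAux, dualActionMap, TensorProduct.lift.tmul, LinearMap.mk₂_apply,
    LinearMap.comp_apply, LinearMap.lcomp_apply, LinearMap.restrictScalarsₗ_apply,
    LinearMap.restrictScalars_apply, LinearEquiv.coe_coe, AlgHom.toLinearMap_apply]
  induction ρ b with
  | zero => simp
  | tmul x h => simp
  | add x y hx hy => simp only [map_add, hx, hy]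

/-- For a `k`-progenerator Hopf algebra `H` and a right `H`-comodule algebra `A`:
`can'` is bijective and `A` is faithfully flat over `k` iff
`Φ : Hom_k(H,k) ⊗ A → End_k(A)` is bijective and `A` is a `k`-progenerator. -/
theorem hopfGalois_iff_phi_bijective
    [Module.Finite k H] [Module.Projective k H] [FaithfulSMul k H]
    (ρ : A →ₐ[k] A ⊗[k] H) (hρ : IsComoduleAlgebra k A H ρ) :
    (Function.Bijective (canHopf k A H ρ) ∧ Module.FaithfullyFlat k A) ↔
    (Function.Bijective (phiMap k A H ρ) ∧
      Module.Finite k A ∧ Module.Projective k A ∧ FaithfulSMul k A) := by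
  rw [canHopf_eq_canonicalMap, phiMap_eq_dualActionMap]
  exact hopfGalois_iff_phi_bijective_general ρ.toLinearMap

end Hopf
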